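/- The function f(ψ) = ψ sin ψ + cos ψ · log(cos ψ) satisfies 0 ≤ f(ψ) < π/2 for all ψ ∈ (−π/2, π/2), and f(ψ) → π/2 as ψ → π/2 from the left; in particular f is nonnegative and bounded on (−π/2, π/2). -/

import Mathlib

open Real Filter

/-! Write `c = cos ψ ∈ [0, 1]`. The tangent-line bound `c - 1 ≤ c log c` together with `c² ≤ c`
shows that `c log c` takes at most `sin² ψ` away from `ψ sin ψ`, which is itself at least `sin² ψ`.
From above, `c log c ≤ 0` and `ψ sin ψ ≤ |ψ|`. The limit is the value at `π / 2`, where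
`0 * log 0 = 0` agrees with the continuous extension of `t log t` to `t = 0`. -/

lemma sin_sq_le_mul_sin {x : ℝ} (hx : |x| ≤ π) : sin x ^ 2 ≤ x * sin x :=
  calc sin x ^ 2 = |sin x| * |sin x| := by rw [sq, abs_mul_abs_self]
    _ ≤ |x| * |sin x| := mul_le_mul_of_nonneg_right abs_sin_le_abs (abs_nonneg _)
    _ = |x| * sin |x| := by rw [abs_sin_eq_sin_abs_of_abs_le_pi hx]
    _ = x * sin x := by rcases abs_choice x with h | h <;> simp [h]

lemma mul_sin_le_abs (x : ℝ) : x * sin x ≤ |x| :=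
  calc x * sin x ≤ |x| * |sin x| := (le_abs_self _).trans_eq (abs_mul x (sin x))
    _ ≤ |x| := mul_le_of_le_one_right (abs_nonneg x) (abs_sin_le_one x)

lemma neg_sin_sq_le_cos_mul_log_cos {x : ℝ} (hx : 0 ≤ cos x) :
    -sin x ^ 2 ≤ cos x * log (cos x) :=
  calc -sin x ^ 2 = cos x ^ 2 - 1 := by rw [sin_sq]; ring
    _ ≤ cos x - 1 := sub_le_sub_right (pow_le_of_le_one hx (cos_le_one x) two_ne_zero) 1
    _ ≤ cos x * log (cos x) := self_sub_one_le_mul_log hx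

lemma mul_sin_add_cos_mul_log_cos_nonneg {x : ℝ} (hx : |x| ≤ π / 2) :
    0 ≤ x * sin x + cos x * log (cos x) := by
  have hcos : 0 ≤ cos x := cos_nonneg_of_mem_Icc (abs_le.mp hx)
  have hsin : sin x ^ 2 ≤ x * sin x := sin_sq_le_mul_sin (hx.trans (half_le_self pi_nonneg))
  linarith [neg_sin_sq_le_cos_mul_log_cos hcos]

lemma mul_sin_add_cos_mul_log_cos_le_abs {x : ℝ} (hx : 0 ≤ cos x) :
    x * sin x + cos x * log (cos x) ≤ |x| :=
  add_le_of_le_of_nonpos (mul_sin_le_abs x) (mul_log_nonpos hx (cos_le_one x))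

lemma continuous_mul_sin_add_cos_mul_log_cos :
    Continuous fun x : ℝ ↦ x * sin x + cos x * log (cos x) :=
  (continuous_id.mul continuous_sin).add continuous_cos.mul_log

/-- The function `f(ψ) = ψ sin ψ + cos ψ · log (cos ψ)` satisfies
`0 ≤ f ψ < π/2` on `(−π/2, π/2)` and `f ψ → π/2` as `ψ → π/2⁻`;
in particular `f` is nonnegative and bounded on `(−π/2, π/2)`. -/
theorem f_nonneg_bounded_limit
    (f : ℝ → ℝ)
    (hf : ∀ s : ℝ, f s = s * Real.sin s + Real.cos s * Real.log (Real.cos s)) :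
    (∀ ψ ∈ Set.Ioo (-(π / 2)) (π / 2), 0 ≤ f ψ ∧ f ψ < π / 2) ∧
      Filter.Tendsto f (nhdsWithin (π / 2) (Set.Iio (π / 2))) (nhds (π / 2)) := by
  obtain rfl : f = fun s ↦ s * sin s + cos s * log (cos s) := funext hf
  constructor
  · intro ψ hψ
    have habs : |ψ| < π / 2 := abs_lt.mpr hψ
    have hcos : 0 < cos ψ := cos_pos_of_mem_Ioo hψ
    exact ⟨mul_sin_add_cos_mul_log_cos_nonneg habs.le,
      (mul_sin_add_cos_mul_log_cos_le_abs hcos.le).trans_lt habs⟩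
  · have hlim := continuous_mul_sin_add_cos_mul_log_cos.tendsto (π / 2)
    simp only [sin_pi_div_two, cos_pi_div_two, mul_one, zero_mul, add_zero] at hlim
    exact hlim.mono_left nhdsWithin_le_nhds
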